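/- There exists a constant C > 0 such that for every r ≥ 2: | Σ_{x ∈ B_{r+1}} f(x) − (2/π) ln r | ≤ C, where the sum of f(x) := max(|f_H(x)|, |f_V(x)|) is over the Euclidean ball B_{r+1} := {x ∈ ℤ² : |x| < r+1}. -/

import Mathlib

/-!
The estimate comes from exact identities; no asymptotic expansion of the kernel is needed.

In the coordinates `u = x + y`, `v = x - y` the planar walk is a pair of independent walks on `ℤ`,
so `p_i(x, y) = q_i(u) q_i(v)` (`srw_eq_mul`). This has two consequences.

*Sign of the weights.* Off the origin `f_H + f_V = Δa = 0`, hence `f = |f_H|` and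
`2 f_H = f_H - f_V`, which is a quarter of the sum over `i` of
`(q_i(u+1) - q_i(u-1)) (q_i(v+1) - q_i(v-1))`. As `q_i` is unimodal, `f_H ≥ 0` on the quadrant
`|y| ≤ x` (`fH_nonneg`). On a side of the box `[-n, n]²` the sum of `f` is therefore a telescoping
sum of second differences of `a`, and the whole boundary layer contributes `2 d_n` with
`d_n = a(n, n+1) - a(n, n)` (`W_succ`). Harmonicity on the diagonal gives
`d_n + d_{n-1} = a(n, n) - a(n-1, n-1)`, so the box sum is
`f(0) - 1 + a(n, n) + d_n` (`W_eq`), where `d_n` is bounded.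

*Diagonal values.* `a(k+1, k+1) - a(k, k) = ∑ q_{2i}(0) (q_{2i}(2k) - q_{2i}(2k+2))`. For `k = 0`
the partial sums are `4 m q_{2m}(0)²`, which tend to `4/π` by Wallis' product (`tendsto_F_zero`), and
a Wilf–Zeilberger identity (`wz`) shows that `(2k+1)` times the sum does not depend on `k`. Hence
`a(n, n) = (4/π) ∑_{k<n} 1/(2k+1) = (2/π) log n + O(1)`. The same partial sums dominate the series
that defines `a`, which gives its convergence (`tendsto_S`).

Finally `f ≥ 0`, and the ball of radius `r + 1` lies between the boxes of half-widths `⌊r/2⌋` and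
`r`, whose sums differ by a bounded amount.
-/


open Filter
open scoped ENNReal

namespace HV

abbrev Z2 := ℤ × ℤ

/-- The Euclidean norm of a lattice point. -/
noncomputable def norm2 (x : Z2) : ℝ := Real.sqrt ((x.1 : ℝ) ^ 2 + (x.2 : ℝ) ^ 2)

/-- A label configuration: `true` stands for label `H`, `false` for label `V`. -/
abbrev Config := Z2 → Bool

end HV

namespace HV

/-- `srw i x`: the probability that the simple random walk on `ℤ²` started at the
origin is at `x` after `i` steps. -/
noncomputable def srw : ℕ → Z2 → ℝ
  | 0, x => if x = (0, 0) then 1 else 0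
  | i + 1, x =>
    (srw i (x + (1, 0)) + srw i (x - (1, 0)) + srw i (x + (0, 1)) + srw i (x - (0, 1))) / 4

/-- The potential kernel `a` of the simple random walk on `ℤ²`:
`a(x) = lim_{m→∞} Σ_{i<m} (p_i(0,0) − p_i(x))`. -/
noncomputable def potKer (x : Z2) : ℝ :=
  limUnder atTop fun m : ℕ => ∑ i ∈ Finset.range m, (srw i (0, 0) - srw i x)

/-- `f_H(x) = (a(x+(0,1)) + a(x−(0,1)) − 2a(x))/4`. -/
noncomputable def fH (x : Z2) : ℝ :=
  (potKer (x + (0, 1)) + potKer (x - (0, 1)) - 2 * potKer x) / 4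

/-- `f_V(x) = (a(x+(1,0)) + a(x−(1,0)) − 2a(x))/4`. -/
noncomputable def fV (x : Z2) : ℝ :=
  (potKer (x + (1, 0)) + potKer (x - (1, 0)) - 2 * potKer x) / 4

/-- The weight `wt_ζ(x)` of the vertex `x` under the label configuration `ζ`. -/
noncomputable def wt (ζ : Config) (x : Z2) : ℝ := if ζ x then fH x else fV x

/-- `f(x) = max(|f_H(x)|, |f_V(x)|)`. -/
noncomputable def fMax (x : Z2) : ℝ := max |fH x| |fV x|

/-- The argument of a nonzero lattice point: the unique `θ ∈ (−π, π]` with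
`x/|x| = (cos θ, sin θ)`. -/
noncomputable def argZ (x : Z2) : ℝ := Complex.arg ((x.1 : ℂ) + (x.2 : ℂ) * Complex.I)

open Classical in
/-- The set of lattice points in the open Euclidean ball of radius `R`, as a finite
set. -/
noncomputable def ballFinset (R : ℝ) : Finset Z2 :=
  (Finset.Icc (-⌈R⌉, -⌈R⌉) (⌈R⌉, ⌈R⌉)).filter fun x => norm2 x < R

end HV

namespace HV

open Topology

/-! ### The one-dimensional walk -/

/-- `q n u`: the probability that the simple random walk on `ℤ` started at `0` is at `u` after
`n` steps. -/
noncomputable def q : ℕ → ℤ → ℝ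
  | 0, u => if u = 0 then 1 else 0
  | n + 1, u => (q n (u - 1) + q n (u + 1)) / 2

/-- The coordinates `x + y` and `x - y` of the planar walk are two independent walks on `ℤ`. -/
lemma srw_eq_mul (n : ℕ) (x y : ℤ) : srw n (x, y) = q n (x + y) * q n (x - y) := by
  induction n generalizing x y with
  | zero =>
    simp only [srw, q, Prod.mk.injEq]
    by_cases h1 : x + y = 0 <;> by_cases h2 : x - y = 0
    · rw [if_pos (by omega), if_pos h1, if_pos h2]; norm_num
    · rw [if_neg (by omega), if_neg h2]; simp
    · rw [if_neg (by omega), if_neg h1]; simp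
    · rw [if_neg (by omega), if_neg h1]; simp
  | succ n ih =>
    simp only [srw, q, Prod.mk_add_mk, Prod.mk_sub_mk, ih]
    rw [show x + 1 + (y + 0) = x + y + 1 by ring, show x + 1 - (y + 0) = x - y + 1 by ring,
      show x - 1 + (y - 0) = x + y - 1 by ring, show x - 1 - (y - 0) = x - y - 1 by ring,
      show x + 0 + (y + 1) = x + y + 1 by ring, show x + 0 - (y + 1) = x - y - 1 by ring,
      show x - 0 + (y - 1) = x + y - 1 by ring, show x - 0 - (y - 1) = x - y + 1 by ring]
    ring

lemma q_nonneg (n : ℕ) (u : ℤ) : 0 ≤ q n u := by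
  induction n generalizing u with
  | zero => simp only [q]; split_ifs <;> norm_num
  | succ n ih => simp only [q]; linarith [ih (u - 1), ih (u + 1)]

lemma q_neg (n : ℕ) (u : ℤ) : q n (-u) = q n u := by
  induction n generalizing u with
  | zero => simp [q]
  | succ n ih =>
    simp only [q]
    rw [show -u - 1 = -(u + 1) by ring, show -u + 1 = -(u - 1) by ring, ih, ih]; ring

lemma q_parity (n : ℕ) (u : ℤ) (h : (n + u) % 2 = 1) : q n u = 0 := by
  induction n generalizing u with
  | zero => simp only [q]; rw [if_neg]; rintro rfl; simp at h
  | succ n ih =>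
    simp only [q]; push_cast at h
    rw [ih _ (by omega), ih _ (by omega)]; simp

/-- Unimodality, on points of the same parity. -/
lemma q_step_le (n : ℕ) (u : ℤ) (hu : 0 ≤ u) : q n (u + 1) ≤ q n (u - 1) := by
  induction n generalizing u with
  | zero =>
    simp only [q]; rw [if_neg (by omega)]; split_ifs <;> norm_num
  | succ n ih =>
    rcases hu.eq_or_lt with rfl | hu
    · rw [show (0 : ℤ) - 1 = -(0 + 1) by ring, q_neg]
    · simp only [q]
      have h1 := ih (u - 1) (by omega)
      have h2 := ih (u + 1) (by omega)
      rw [show u - 1 + 1 = u + 1 - 1 by ring] at h1 ⊢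
      linarith

lemma q_two_mul_le (n k : ℕ) : q n (2 * k) ≤ q n 0 := by
  induction k with
  | zero => simp
  | succ k ih =>
    have h := q_step_le n (2 * k + 1) (by positivity)
    push_cast
    rw [show (2 : ℤ) * (k + 1) = 2 * k + 1 + 1 by ring]
    rw [show (2 : ℤ) * k + 1 - 1 = 2 * k by ring] at h
    linarith

lemma q_even_le (n : ℕ) (u : ℤ) (hu : u % 2 = 0) : q n u ≤ q n 0 := by
  have h := q_two_mul_le n (u.natAbs / 2)
  have h2 : (2 * ((u.natAbs / 2 : ℕ) : ℤ)) = u ∨ (2 * ((u.natAbs / 2 : ℕ) : ℤ)) = -u := by omega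
  rcases h2 with h2 | h2 <;> rw [h2] at h
  · exact h
  · rwa [q_neg] at h

/-- The ratio of neighbouring binomial coefficients, valid (as `0 = 0`) also at points of the
wrong parity. -/
lemma q_space (n : ℕ) (u : ℤ) : ((n : ℝ) + u + 2) * q n (u + 2) = (n - u) * q n u := by
  induction n generalizing u with
  | zero =>
    simp only [q]
    by_cases h1 : u + 2 = 0
    · obtain rfl : u = -2 := by omega
      norm_num
    · by_cases h2 : u = 0
      · subst h2; norm_num
      · rw [if_neg h1, if_neg h2]; simp
  | succ n ih =>
    have h1 := ih (u + 1)
    have h2 := ih (u - 1)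
    simp only [q]
    rw [show u + 1 + 2 = u + 2 + 1 by ring] at h1
    rw [show u - 1 + 2 = u + 1 by ring] at h2
    rw [show u + 2 - 1 = u + 1 by ring]
    push_cast at *
    linear_combination h1 / 2 + h2 / 2

lemma q_add_two (n : ℕ) (u : ℤ) :
    q (n + 2) u = (q n (u - 2) + 2 * q n u + q n (u + 2)) / 4 := by
  simp only [q]
  rw [show u - 1 - 1 = u - 2 by ring, show u - 1 + 1 = u by ring, show u + 1 - 1 = u by ring,
    show u + 1 + 1 = u + 2 by ring]
  ring

/-- `P k i`: the probability that the walk on `ℤ` is at `2 k` at the even time `2 i`. -/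
noncomputable def P (k i : ℕ) : ℝ := q (2 * i) (2 * k)

lemma P_nonneg (k i : ℕ) : 0 ≤ P k i := q_nonneg _ _

lemma P_le (k i : ℕ) : P k i ≤ P 0 i := by
  simpa [P] using q_two_mul_le (2 * i) k

lemma P_zero_right (k : ℕ) : P (k + 1) 0 = 0 := by
  simp only [P, q]; rw [if_neg]; omega

lemma P_space (k i : ℕ) : ((i : ℝ) + k + 1) * P (k + 1) i = (i - k) * P k i := by
  have h := q_space (2 * i) (2 * k)
  simp only [P]
  push_cast at *
  rw [show (2 : ℤ) * (k + 1) = 2 * k + 2 by ring]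
  linear_combination h / 2

lemma P_time (k i : ℕ) : P (k + 1) (i + 1) = (P k i + 2 * P (k + 1) i + P (k + 2) i) / 4 := by
  have h := q_add_two (2 * i) (2 * k + 2)
  simp only [P]
  push_cast
  rw [show (2 : ℤ) * (k + 1) = 2 * k + 2 by ring, show (2 : ℤ) * (k + 2) = 2 * k + 2 + 2 by ring,
    show 2 * (i + 1) = 2 * i + 2 by ring, h, show (2 : ℤ) * k + 2 - 2 = 2 * k by ring]

lemma P_time_zero (i : ℕ) : (2 * (i : ℝ) + 2) * P 0 (i + 1) = (2 * i + 1) * P 0 i := by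
  have h := q_add_two (2 * i) 0
  have h2 := P_space 0 i
  have h3 := q_neg (2 * i) 2
  simp only [P] at h2 ⊢
  push_cast at h2 ⊢
  simp only [zero_sub, zero_add, sub_zero, add_zero] at h h2 ⊢
  rw [show 2 * (i + 1) = 2 * i + 2 by ring, h, h3]
  linear_combination h2

/-! ### The diagonal increments of the potential kernel -/

/-- The terms with `k` and `k + 1` differ by a telescoping quantity (a Wilf–Zeilberger pair). -/
lemma wz (k i : ℕ) :
    8 * ((k : ℝ) + 1) * (P 0 (i + 1) * P (k + 1) (i + 1) - P 0 i * P (k + 1) i) =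
      (2 * k + 1) * (P 0 i * (P k i - P (k + 1) i)) -
        (2 * k + 3) * (P 0 i * (P (k + 1) i - P (k + 2) i)) := by
  have h1 := P_space k i
  have h2 := P_space (k + 1) i
  have h3 := P_time_zero i
  have hi : (2 * (i : ℝ) + 2) ≠ 0 := by positivity
  rw [P_time]
  apply mul_left_cancel₀ hi
  push_cast at h2
  linear_combination 2 * ((k : ℝ) + 1) * (P k i + 2 * P (k + 1) i + P (k + 2) i) * h3
    - 2 * P 0 i * h1 - 2 * P 0 i * h2

/-- Partial sums of the series for `a(k+1,k+1) - a(k,k)`, over even times. -/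
noncomputable def F (k m : ℕ) : ℝ := ∑ i ∈ Finset.range m, P 0 i * (P k i - P (k + 1) i)

/-- The case `k = 0` sums in closed form. -/
lemma F_zero (m : ℕ) : F 0 m = 4 * m * P 0 m ^ 2 := by
  induction m with
  | zero => simp [F]
  | succ m ih =>
    have h1 := P_space 0 m
    have h2 := P_time_zero m
    rw [F, Finset.sum_range_succ, ← F, ih]
    have hm : ((m : ℝ) + 1) ≠ 0 := by positivity
    apply mul_left_cancel₀ hm
    push_cast at *
    simp only [sub_zero, add_zero] at *
    linear_combination (-P 0 m) * h1 -
      ((2 * m + 2) * P 0 (m + 1) + (2 * m + 1) * P 0 m) * h2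

lemma F_succ (k m : ℕ) :
    (2 * (k : ℝ) + 3) * F (k + 1) m = (2 * k + 1) * F k m - 8 * (k + 1) * (P 0 m * P (k + 1) m) := by
  induction m with
  | zero => simp [F, P_zero_right]
  | succ m ih =>
    have h := wz k m
    simp only [F, Finset.sum_range_succ] at *
    linear_combination ih + h

/-- The return probability in terms of the partial Wallis products `W m → π / 2`. -/
lemma P_wallis (m : ℕ) : (2 * (m : ℝ) + 1) * Real.Wallis.W m * P 0 m ^ 2 = 1 := by
  induction m with
  | zero => simp [Real.Wallis.W, P, q]
  | succ m ih =>
    have h2 := P_time_zero m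
    have h3 : P 0 (m + 1) = (2 * m + 1) / (2 * m + 2) * P 0 m := by
      field_simp; linarith
    rw [Real.Wallis.W_succ, h3]
    refine Eq.trans ?_ ih
    push_cast
    field_simp
    ring

lemma tendsto_P_sq : Tendsto (fun m : ℕ => P 0 m ^ 2) atTop (𝓝 0) := by
  have h1 : Tendsto (fun m : ℕ => 1 / ((m : ℝ) + 1) * (1 / Real.Wallis.W m)) atTop
      (𝓝 (0 * (1 / (Real.pi / 2)))) := by
    refine tendsto_one_div_add_atTop_nhds_zero_nat.mul ?_
    exact tendsto_const_nhds.div Real.Wallis.tendsto_W_nhds_pi_div_two (by positivity)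
  rw [zero_mul] at h1
  refine squeeze_zero (fun m => sq_nonneg _) (fun m => ?_) h1
  have h := P_wallis m
  have hW := Real.Wallis.W_pos m
  rw [one_div_mul_one_div, le_div_iff₀ (by positivity)]
  have : 0 ≤ (m : ℝ) * (Real.Wallis.W m * P 0 m ^ 2) := by positivity
  nlinarith

lemma tendsto_F_zero : Tendsto (F 0) atTop (𝓝 (4 / Real.pi)) := by
  have h1 : Tendsto (fun m : ℕ => (2 - 2 * P 0 m ^ 2 * Real.Wallis.W m) / Real.Wallis.W m) atTop
      (𝓝 ((2 - 2 * 0 * (Real.pi / 2)) / (Real.pi / 2))) := by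
    refine Tendsto.div ?_ Real.Wallis.tendsto_W_nhds_pi_div_two (by positivity)
    exact tendsto_const_nhds.sub
      ((tendsto_P_sq.const_mul 2).mul Real.Wallis.tendsto_W_nhds_pi_div_two)
  convert h1 using 1
  · funext m
    have hW := Real.Wallis.W_pos m
    rw [F_zero, eq_div_iff hW.ne']
    linear_combination 2 * P_wallis m
  · congr 1; field_simp; norm_num

lemma tendsto_PP (k : ℕ) : Tendsto (fun m : ℕ => P 0 m * P k m) atTop (𝓝 0) := by
  refine squeeze_zero (fun m => mul_nonneg (P_nonneg _ _) (P_nonneg _ _)) (fun m => ?_)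
    tendsto_P_sq
  rw [sq]
  exact mul_le_mul_of_nonneg_left (P_le k m) (P_nonneg _ _)

lemma tendsto_F (k : ℕ) : Tendsto (F k) atTop (𝓝 (4 / Real.pi / (2 * k + 1))) := by
  induction k with
  | zero => simpa using tendsto_F_zero
  | succ k ih =>
    have h1 := ((ih.const_mul (2 * (k : ℝ) + 1)).sub
      ((tendsto_PP (k + 1)).const_mul (8 * ((k : ℝ) + 1)))).div_const (2 * (k : ℝ) + 3)
    convert h1 using 1
    · funext m
      rw [← F_succ]; field_simp
    · congr 1; push_cast; field_simp; ring

end HV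

namespace HV

open Topology

/-! ### Existence and harmonicity of the potential kernel -/

lemma q_le_P (m : ℕ) (u : ℤ) : q m u ≤ P 0 (m / 2) := by
  have key : ∀ (j : ℕ) (v : ℤ), q (2 * j) v ≤ P 0 j := by
    intro j v
    rcases Int.emod_two_eq_zero_or_one v with h | h
    · simpa [P] using q_even_le (2 * j) v h
    · rw [q_parity (2 * j) v (by push_cast; omega)]
      exact P_nonneg _ _
  obtain ⟨j, rfl | rfl⟩ := m.even_or_odd'
  · rw [show 2 * j / 2 = j by omega]; exact key j u
  · rw [show (2 * j + 1) / 2 = j by omega]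
    simp only [q]
    linarith [key j (u - 1), key j (u + 1)]

lemma tendsto_srw (x : Z2) : Tendsto (fun m => srw m x) atTop (𝓝 0) := by
  have h := tendsto_P_sq.comp (Nat.tendsto_div_const_atTop (n := 2) two_ne_zero)
  obtain ⟨a, b⟩ := x
  refine squeeze_zero (fun m => ?_) (fun m => ?_) h
  · rw [srw_eq_mul]; exact mul_nonneg (q_nonneg _ _) (q_nonneg _ _)
  · rw [srw_eq_mul, Function.comp, sq]
    exact mul_le_mul (q_le_P _ _) (q_le_P _ _) (q_nonneg _ _) (P_nonneg _ _)

lemma P_antitone (k i : ℕ) : P (k + 1) i ≤ P k i := by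
  have h := q_step_le (2 * i) (2 * k + 1) (by positivity)
  simp only [P]
  push_cast
  rwa [show (2 : ℤ) * (k + 1) = 2 * k + 1 + 1 by ring,
    show (2 : ℤ) * k = 2 * k + 1 - 1 by ring, show (2 : ℤ) * k + 1 - 1 + 1 = 2 * k + 1 by ring]

lemma hasSum_F (k : ℕ) :
    HasSum (fun i => P 0 i * (P k i - P (k + 1) i)) (4 / Real.pi / (2 * k + 1)) :=
  (hasSum_iff_tendsto_nat_of_nonneg
    (fun i => mul_nonneg (P_nonneg _ _) (sub_nonneg.2 (P_antitone k i))) _).2 (tendsto_F k)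

lemma summable_P (k : ℕ) : Summable (fun i => P 0 i * (P 0 i - P k i)) := by
  induction k with
  | zero => simp
  | succ k ih =>
    refine (ih.add (hasSum_F k).summable).congr (fun i => ?_)
    ring

lemma summable_q (u : ℤ) (hu : u % 2 = 0) : Summable (fun i => q i 0 * (q i 0 - q i u)) := by
  refine Summable.even_add_odd ?_ ?_
  · refine (summable_P (u.natAbs / 2)).congr (fun i => ?_)
    have h : P (u.natAbs / 2) i = q (2 * i) u := by
      have h2 : (2 * ((u.natAbs / 2 : ℕ) : ℤ)) = u ∨ (2 * ((u.natAbs / 2 : ℕ) : ℤ)) = -u := by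
        omega
      rcases h2 with h2 | h2 <;> rw [P, h2]
      rw [q_neg]
    rw [h]; simp [P]
  · refine summable_zero.congr (fun i => ?_)
    rw [q_parity (2 * i + 1) 0 (by push_cast; omega)]; simp

/-- At even points the terms of the series for `a` are nonnegative, with
`q(0)² - q(u) q(v) ≤ q(0) (q(0) - q(u)) + q(0) (q(0) - q(v))`. -/
lemma summable_even (x y : ℤ) (h : (x + y) % 2 = 0) :
    Summable (fun i => srw i (0, 0) - srw i (x, y)) := by
  have hy : (x - y) % 2 = 0 := by omega
  refine Summable.of_nonneg_of_le (fun i => ?_) (fun i => ?_)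
    ((summable_q _ h).add (summable_q _ hy))
  all_goals
    have h1 := q_even_le i _ h
    have h2 := q_even_le i _ hy
    rw [srw_eq_mul, srw_eq_mul, add_zero, sub_zero]
  · have := mul_le_mul h1 h2 (q_nonneg _ _) (q_nonneg _ _)
    linarith
  · nlinarith [mul_nonneg (sub_nonneg.2 h1) (sub_nonneg.2 h2)]

/-- Partial sums of the series defining the potential kernel. -/
noncomputable def S (m : ℕ) (x : Z2) : ℝ := ∑ i ∈ Finset.range m, (srw i (0, 0) - srw i x)

/-- Averaging over the neighbours shifts time by one step, so only two boundary terms remain. -/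
lemma S_harmonic (m : ℕ) (x : Z2) :
    (S m (x + (1, 0)) + S m (x - (1, 0)) + S m (x + (0, 1)) + S m (x - (0, 1))) / 4 =
      S m x + srw 0 x - srw m x := by
  induction m with
  | zero => simp [S]
  | succ m ih =>
    simp only [S, Finset.sum_range_succ] at *
    rw [show srw (m + 1) x = (srw m (x + (1, 0)) + srw m (x - (1, 0)) + srw m (x + (0, 1))
      + srw m (x - (0, 1))) / 4 from rfl]
    linear_combination ih

lemma tendsto_S (x : Z2) : Tendsto (fun m => S m x) atTop (𝓝 (potKer x)) := by
  refine tendsto_nhds_limUnder ?_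
  have key : ∀ a b : ℤ, (a + b) % 2 = 0 → ∃ l, Tendsto (fun m => S m (a, b)) atTop (𝓝 l) :=
    fun a b h => ⟨_, (summable_even a b h).hasSum.tendsto_sum_nat⟩
  obtain ⟨a, b⟩ := x
  rcases Int.emod_two_eq_zero_or_one (a + b) with h | h
  · exact key a b h
  · -- At an odd point the partial sum is the average over the (even) neighbours, up to `o(1)`.
    obtain ⟨l1, h1⟩ := key (a + 1) (b + 0) (by omega)
    obtain ⟨l2, h2⟩ := key (a - 1) (b - 0) (by omega)
    obtain ⟨l3, h3⟩ := key (a + 0) (b + 1) (by omega)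
    obtain ⟨l4, h4⟩ := key (a - 0) (b - 1) (by omega)
    refine ⟨_, ((((((h1.add h2).add h3).add h4).div_const 4).sub_const (srw 0 (a, b))).add
      (tendsto_srw (a, b))).congr (fun m => ?_)⟩
    have := S_harmonic m (a, b)
    simp only [Prod.mk_add_mk, Prod.mk_sub_mk] at this
    rw [this]; simp only [S]; ring

lemma potKer_harmonic (x : Z2) :
    (potKer (x + (1, 0)) + potKer (x - (1, 0)) + potKer (x + (0, 1)) + potKer (x - (0, 1))) / 4 =
      potKer x + srw 0 x := by
  have h1 := ((((tendsto_S (x + (1, 0))).add (tendsto_S (x - (1, 0)))).add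
    (tendsto_S (x + (0, 1)))).add (tendsto_S (x - (0, 1)))).div_const 4
  have h2 := ((tendsto_S x).add_const (srw 0 x)).sub (tendsto_srw x)
  rw [sub_zero] at h2
  exact tendsto_nhds_unique h1 (h2.congr fun m => (S_harmonic m x).symm)

lemma potKer_congr {x y : Z2} (h : ∀ i, srw i x = srw i y) : potKer x = potKer y := by
  simp only [potKer, h]

lemma potKer_swap (a b : ℤ) : potKer (a, b) = potKer (b, a) :=
  potKer_congr fun i => by
    rw [srw_eq_mul, srw_eq_mul, add_comm b a, ← neg_sub a b, q_neg]

lemma potKer_neg_right (a b : ℤ) : potKer (a, -b) = potKer (a, b) :=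
  potKer_congr fun i => by
    rw [srw_eq_mul, srw_eq_mul, ← sub_eq_add_neg, sub_neg_eq_add, mul_comm]

lemma potKer_neg_left (a b : ℤ) : potKer (-a, b) = potKer (a, b) := by
  rw [potKer_swap, potKer_neg_right, potKer_swap]

lemma potKer_zero : potKer (0, 0) = 0 := by
  refine tendsto_nhds_unique (tendsto_S (0, 0)) ?_
  simp [S]

lemma potKer_zero_one : potKer (0, 1) = 1 := by
  have h := potKer_harmonic (0, 0)
  simp only [Prod.mk_add_mk, Prod.mk_sub_mk, zero_add, zero_sub, add_zero, sub_zero, srw,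
    potKer_neg_left, potKer_neg_right, potKer_zero, potKer_swap 1 0, if_true] at h
  linarith

/-- Summed over `k`, this is the classical formula `a(n,n) = (4/π) ∑_{k<n} 1/(2k+1)`. -/
lemma potKer_diag (k : ℕ) :
    potKer ((k + 1 : ℕ), (k + 1 : ℕ)) - potKer ((k : ℕ), (k : ℕ)) = 4 / Real.pi / (2 * k + 1) := by
  have h1 := (tendsto_S ((k + 1 : ℕ), (k + 1 : ℕ))).sub (tendsto_S ((k : ℕ), (k : ℕ)))
  -- Only even times contribute, since `q i 0 = 0` for odd `i`.
  have h2 := h1.comp (tendsto_id.const_mul_atTop' (r := 2) two_pos)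
  refine tendsto_nhds_unique h2 ((tendsto_F k).congr fun m => ?_)
  simp only [Function.comp, id, S, ← Finset.sum_sub_distrib, F]
  induction m with
  | zero => simp
  | succ m ih =>
    rw [Finset.sum_range_succ, ih, show 2 * (m + 1) = 2 * m + 1 + 1 by ring,
      Finset.sum_range_succ _ (2 * m + 1), Finset.sum_range_succ _ (2 * m)]
    simp only [srw_eq_mul, P, sub_self, add_zero]
    rw [q_parity (2 * m + 1) 0 (by push_cast; omega)]
    push_cast
    rw [show (k : ℤ) + 1 + (k + 1) = 2 * (k + 1) by ring, show (k : ℤ) + k = 2 * k by ring]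
    simp only [mul_zero]
    ring

/-! ### The sign of the weights -/

lemma fH_add_fV (x : Z2) (hx : x ≠ (0, 0)) : fH x + fV x = 0 := by
  have h := potKer_harmonic x
  rw [show srw 0 x = 0 by simp only [srw]; rw [if_neg hx]] at h
  simp only [fH, fV]
  linarith

lemma fMax_eq (x : Z2) (hx : x ≠ (0, 0)) : fMax x = |fH x| := by
  rw [fMax, show fV x = -fH x by linarith [fH_add_fV x hx], abs_neg, max_self]

lemma fMax_nonneg (x : Z2) : 0 ≤ fMax x := (abs_nonneg _).trans (le_max_left _ _)

/-- In the right quadrant `|b| ≤ a` the weight `f_H` is nonnegative: there `2 f_H = f_H - f_V` is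
a sum over time of products of two increments of unimodal functions, of equal sign. -/
lemma fH_nonneg (a b : ℤ) (ha : 0 < a) (h1 : b ≤ a) (h2 : -a ≤ b) : 0 ≤ fH (a, b) := by
  have h0 := fH_add_fV (a, b) (by intro h; simp only [Prod.mk.injEq] at h; omega)
  have hS := ((tendsto_S (a + 0, b + 1)).add (tendsto_S (a - 0, b - 1))).sub
    ((tendsto_S (a + 1, b + 0)).add (tendsto_S (a - 1, b - 0)))
  have key := ge_of_tendsto' hS (b := 0) (fun m => by
    simp only [S, ← Finset.sum_add_distrib, ← Finset.sum_sub_distrib]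
    -- The term at time `i` is the product of the increments of `q i` at `a + b` and `a - b`.
    refine Finset.sum_nonneg fun i _ => ?_
    have h3 := q_step_le i (a + b) (by omega)
    have h4 := q_step_le i (a - b) (by omega)
    simp only [srw_eq_mul]
    rw [show a + 1 + (b + 0) = a + b + 1 by ring, show a + 1 - (b + 0) = a - b + 1 by ring,
      show a - 1 + (b - 0) = a + b - 1 by ring, show a - 1 - (b - 0) = a - b - 1 by ring,
      show a + 0 + (b + 1) = a + b + 1 by ring, show a + 0 - (b + 1) = a - b - 1 by ring,
      show a - 0 + (b - 1) = a + b - 1 by ring, show a - 0 - (b - 1) = a - b + 1 by ring]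
    nlinarith [mul_nonneg (sub_nonneg.2 h3) (sub_nonneg.2 h4)])
  simp only [fH, fV, Prod.mk_add_mk, Prod.mk_sub_mk] at h0 ⊢
  linarith

lemma fMax_neg_left (a b : ℤ) : fMax (-a, b) = fMax (a, b) := by
  have h1 : -a + 1 = -(a - 1) := by ring
  have h2 : -a - 1 = -(a + 1) := by ring
  simp only [fMax, fH, fV, Prod.mk_add_mk, Prod.mk_sub_mk, add_zero, sub_zero, h1, h2,
    potKer_neg_left]
  rw [add_comm (potKer (a - 1, b))]

lemma fMax_swap (a b : ℤ) : fMax (a, b) = fMax (b, a) := by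
  simp only [fMax, fH, fV, Prod.mk_add_mk, Prod.mk_sub_mk, add_zero, sub_zero]
  rw [max_comm, potKer_swap a b, potKer_swap (a + 1), potKer_swap (a - 1), potKer_swap a (b + 1),
    potKer_swap a (b - 1)]

/-! ### Sums over boxes -/

/-- Sum of `h` over the integers of absolute value at most `n`. -/
noncomputable def sy (n : ℕ) (h : ℤ → ℝ) : ℝ := ∑ i ∈ Finset.Icc (-(n : ℤ)) n, h i

lemma sy_zero (h : ℤ → ℝ) : sy 0 h = h 0 := by simp [sy]

lemma sy_succ (n : ℕ) (h : ℤ → ℝ) : sy (n + 1) h = sy n h + h (n + 1) + h (-(n + 1)) := by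
  have : Finset.Icc (-((n + 1 : ℕ) : ℤ)) ((n + 1 : ℕ) : ℤ) =
      insert (-((n : ℤ) + 1)) (insert ((n : ℤ) + 1) (Finset.Icc (-(n : ℤ)) n)) := by
    ext i; simp only [Finset.mem_Icc, Finset.mem_insert]; push_cast; omega
  rw [sy, this, Finset.sum_insert, Finset.sum_insert, sy]
  · ring
  · simp
  · simp only [Finset.mem_insert, Finset.mem_Icc]; omega

lemma sy_telescope (n : ℕ) (h : ℤ → ℝ) (he : ∀ i, h (-i) = h i) :
    sy n (fun j => (h (j + 1) + h (j - 1) - 2 * h j) / 4) = (h (n + 1) - h n) / 2 := by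
  induction n with
  | zero =>
    have := he 1
    rw [sy_zero]; simp only [Nat.cast_zero, zero_add, zero_sub, this]; ring
  | succ n ih =>
    have h1 := he (n + 1)
    have h2 := he (n + 1 + 1)
    have h3 := he n
    rw [sy_succ, ih, show -((n : ℤ) + 1) + 1 = -n by ring,
      show -((n : ℤ) + 1) - 1 = -(n + 1 + 1) by ring, h1, h2, h3,
      show ((n : ℤ) + 1) - 1 = n by ring]
    push_cast
    ring

/-- The increment of the potential kernel across the edge leaving the diagonal at `(n, n)`. -/
noncomputable def d (n : ℕ) : ℝ := potKer ((n : ℤ), (n : ℤ) + 1) - potKer ((n : ℤ), (n : ℤ))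

lemma d_zero : d 0 = 1 := by simp [d, potKer_zero, potKer_zero_one]

/-- Harmonicity at the diagonal point `(n + 1, n + 1)`. -/
lemma d_succ (n : ℕ) : d (n + 1) + d n = 4 / Real.pi / (2 * n + 1) := by
  have h := potKer_harmonic ((n : ℤ) + 1, (n : ℤ) + 1)
  rw [show srw 0 ((n : ℤ) + 1, (n : ℤ) + 1) = 0 by
    simp only [srw]; rw [if_neg]; simp only [Prod.mk.injEq]; omega] at h
  simp only [Prod.mk_add_mk, Prod.mk_sub_mk, add_zero, sub_zero, add_sub_cancel_right] at h
  rw [potKer_swap ((n : ℤ) + 1 + 1), potKer_swap ((n : ℤ)) (n + 1)] at h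
  rw [← potKer_diag, d, d, potKer_swap (n : ℤ) (n + 1)]
  push_cast
  linarith

/-- One side of a box, on which `f = f_H` is a second difference along that side. -/
lemma sy_fMax (n : ℕ) : sy (n + 1) (fun j => fMax ((n : ℤ) + 1, j)) = d (n + 1) / 2 := by
  have h := sy_telescope (n + 1) (fun j => potKer ((n : ℤ) + 1, j)) (fun i => potKer_neg_right _ _)
  rw [d, Nat.cast_succ]
  push_cast at h
  rw [← h, sy, sy]
  refine Finset.sum_congr rfl fun j hj => ?_
  rw [Finset.mem_Icc] at hj
  push_cast at hj
  rw [fMax_eq _ (by simp only [ne_eq, Prod.mk.injEq]; omega),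
    abs_of_nonneg (fH_nonneg _ _ (by omega) hj.2 hj.1)]
  simp [fH]

lemma d_nonneg (n : ℕ) : 0 ≤ d n := by
  cases n with
  | zero => rw [d_zero]; norm_num
  | succ n =>
    have h : 0 ≤ sy (n + 1) (fun j => fMax ((n : ℤ) + 1, j)) :=
      Finset.sum_nonneg fun j _ => fMax_nonneg _
    rw [sy_fMax] at h
    linarith

lemma fMax_diag (n : ℕ) : fMax ((n : ℤ) + 1, (n : ℤ) + 1) = 0 := by
  have h0 := fH_add_fV ((n : ℤ) + 1, (n : ℤ) + 1) (by simp only [ne_eq, Prod.mk.injEq]; omega)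
  rw [fMax_eq _ (by simp only [ne_eq, Prod.mk.injEq]; omega)]
  simp only [fH, fV, Prod.mk_add_mk, Prod.mk_sub_mk, add_zero, sub_zero] at *
  rw [potKer_swap ((n : ℤ) + 1 + 1), potKer_swap ((n : ℤ) + 1 - 1)] at h0
  rw [abs_eq_zero]
  linarith

/-- Sum of the weights over the box `[-n, n]²`. -/
noncomputable def W (n : ℕ) : ℝ := sy n fun i => sy n fun j => fMax (i, j)

/-- The boundary layer of a box contributes by telescoping along its four sides. -/
lemma W_succ (n : ℕ) : W (n + 1) = W n + 2 * d (n + 1) := by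
  have hm (j : ℤ) : fMax (j, -((n : ℤ) + 1)) = fMax ((n : ℤ) + 1, j) := by
    rw [fMax_swap, fMax_neg_left]
  have hm2 (j : ℤ) : fMax (j, ((n : ℤ) + 1)) = fMax ((n : ℤ) + 1, j) := fMax_swap _ _
  have h1 := sy_fMax n
  have h2 : sy n (fun j => fMax ((n : ℤ) + 1, j)) = d (n + 1) / 2 := by
    rw [sy_succ, hm2, hm] at h1
    simp only [fMax_diag] at h1
    linarith
  have h3 : sy n (fun i => sy (n + 1) fun j => fMax (i, j)) = W n + d (n + 1) := by
    simp only [sy_succ, hm, hm2]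
    have : W n + d (n + 1) = W n + sy n (fun j => fMax ((n : ℤ) + 1, j))
      + sy n (fun j => fMax ((n : ℤ) + 1, j)) := by rw [h2]; ring
    rw [this]
    simp only [W, sy, Finset.sum_add_distrib]
  rw [W, sy_succ, h3]
  simp only [fMax_neg_left, h1]
  ring

/-- The box sum equals the diagonal value `a(n,n)` up to a bounded quantity. -/
lemma W_eq (n : ℕ) : W n = fMax (0, 0) - 1 + potKer ((n : ℕ), (n : ℕ)) + d n := by
  induction n with
  | zero => simp [W, sy_zero, d_zero, potKer_zero]
  | succ n ih =>
    have h1 := d_succ n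
    have h2 := potKer_diag n
    rw [W_succ, ih]
    linarith

/-- Comparison of `a(n,n) = (4/π) ∑_{k<n} 1/(2k+1)` with the harmonic numbers. -/
lemma potKer_bounds (n : ℕ) :
    (2 / Real.pi) * (harmonic n : ℝ) ≤ potKer ((n : ℕ), (n : ℕ)) ∧
    potKer ((n : ℕ), (n : ℕ)) ≤ (2 / Real.pi) * ((harmonic n : ℝ) + 2 - 2 / (n + 1)) := by
  induction n with
  | zero => simp [potKer_zero]
  | succ n ih =>
    have h := potKer_diag n
    have hp : 0 < 2 / Real.pi := by positivity
    have e : 4 / Real.pi / (2 * n + 1) = (2 / Real.pi) * (2 / (2 * n + 1)) := by ring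
    have h1 : 1 / ((n : ℝ) + 1) ≤ 2 / (2 * n + 1) := by
      rw [div_le_div_iff₀ (by positivity) (by positivity)]; linarith
    have h2 : 2 / (2 * (n : ℝ) + 1) ≤ 1 / (n + 1) + 2 / (n + 1) - 2 / (n + 1 + 1) := by
      rw [← sub_nonneg]
      have : 1 / ((n : ℝ) + 1) + 2 / (n + 1) - 2 / (n + 1 + 1) - 2 / (2 * (n : ℝ) + 1) =
          3 * n / ((n + 1) * (n + 1 + 1) * (2 * n + 1)) := by
        field_simp; ring
      rw [this]; positivity
    have h3 := mul_le_mul_of_nonneg_left h1 hp.le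
    have h4 := mul_le_mul_of_nonneg_left h2 hp.le
    have hh : (harmonic (n + 1) : ℝ) = harmonic n + 1 / (n + 1) := by
      rw [harmonic_succ]; push_cast; rw [one_div]
    rw [e] at h
    rw [hh]
    push_cast at h ⊢
    constructor <;> linarith [ih.1, ih.2]

/-! ### Comparison of the ball with boxes -/

lemma W_eq_sum (n : ℕ) :
    W n = ∑ x ∈ Finset.Icc (-(n : ℤ)) n ×ˢ Finset.Icc (-(n : ℤ)) n, fMax x := by
  rw [Finset.sum_product]; rfl

lemma ball_le (r : ℕ) : ∑ x ∈ ballFinset ((r : ℝ) + 1), fMax x ≤ W r := by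
  rw [W_eq_sum]
  refine Finset.sum_le_sum_of_subset_of_nonneg (fun x hx => ?_) fun x _ _ => fMax_nonneg x
  rw [ballFinset, Finset.mem_filter, norm2] at hx
  have hx2 := (Real.sqrt_lt' (by positivity)).1 hx.2
  have ha : |(x.1 : ℝ)| < r + 1 :=
    abs_lt_of_sq_lt_sq (by nlinarith [sq_nonneg (x.2 : ℝ)]) (by positivity)
  have hb : |(x.2 : ℝ)| < r + 1 :=
    abs_lt_of_sq_lt_sq (by nlinarith [sq_nonneg (x.1 : ℝ)]) (by positivity)
  have ha' : |x.1| < (r : ℤ) + 1 := by exact_mod_cast ha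
  have hb' : |x.2| < (r : ℤ) + 1 := by exact_mod_cast hb
  rw [abs_lt] at ha' hb'
  simp only [Finset.mem_product, Finset.mem_Icc]
  omega

lemma le_ball (r : ℕ) : W (r / 2) ≤ ∑ x ∈ ballFinset ((r : ℝ) + 1), fMax x := by
  rw [W_eq_sum]
  refine Finset.sum_le_sum_of_subset_of_nonneg (fun x hx => ?_) fun x _ _ => fMax_nonneg x
  simp only [Finset.mem_product, Finset.mem_Icc] at hx
  obtain ⟨⟨h1, h2⟩, h3, h4⟩ := hx
  have hc : ⌈(r : ℝ) + 1⌉ = (r : ℤ) + 1 := by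
    rw [show (r : ℝ) + 1 = (((r : ℤ) + 1 : ℤ) : ℝ) by push_cast; rfl, Int.ceil_intCast]
  simp only [ballFinset, Finset.mem_filter, norm2, hc]
  constructor
  · rw [Finset.mem_Icc, Prod.le_def, Prod.le_def]
    simp only
    omega
  · rw [Real.sqrt_lt' (by positivity)]
    have ha : 4 * x.1 ^ 2 ≤ (r : ℤ) ^ 2 := by
      nlinarith [show -(r : ℤ) ≤ 2 * x.1 by omega, show 2 * x.1 ≤ (r : ℤ) by omega]
    have hb : 4 * x.2 ^ 2 ≤ (r : ℤ) ^ 2 := by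
      nlinarith [show -(r : ℤ) ≤ 2 * x.2 by omega, show 2 * x.2 ≤ (r : ℤ) by omega]
    have : x.1 ^ 2 + x.2 ^ 2 < ((r : ℤ) + 1) ^ 2 := by nlinarith [Int.natCast_nonneg r]
    exact_mod_cast this

lemma W_le (n : ℕ) : W n ≤ fMax (0, 0) + (2 / Real.pi) * (Real.log n + 5) := by
  have hp : 0 < 2 / Real.pi := by positivity
  have hd : d n ≤ (2 / Real.pi) * 2 := by
    have h1 : 4 / Real.pi / (2 * (n : ℝ) + 1) ≤ 4 / Real.pi :=
      div_le_self (by positivity) (by linarith [Nat.cast_nonneg (α := ℝ) n])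
    have h2 : (2 / Real.pi) * 2 = 4 / Real.pi := by ring
    linarith [d_succ n, d_nonneg (n + 1)]
  have h : (harmonic n : ℝ) + 2 - 2 / (n + 1) ≤ Real.log n + 3 := by
    have : 0 ≤ 2 / ((n : ℝ) + 1) := by positivity
    linarith [harmonic_le_one_add_log n]
  have := mul_le_mul_of_nonneg_left h hp.le
  rw [W_eq]
  linarith [(potKer_bounds n).2]

lemma le_W (n : ℕ) : (2 / Real.pi) * Real.log (n + 1) - 1 ≤ W n := by
  have hp : 0 < 2 / Real.pi := by positivity
  have h := log_add_one_le_harmonic n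
  push_cast at h
  have := mul_le_mul_of_nonneg_left h hp.le
  rw [W_eq]
  linarith [(potKer_bounds n).1, d_nonneg n, fMax_nonneg (0, 0)]

end HV

/-- **Lemma (logarithmic growth of the summed weights).**
There is a constant `C > 0` such that for every `r ≥ 2`,
`|Σ_{x ∈ B_{r+1}} f(x) − (2/π) ln r| ≤ C`, where `f(x) = max(|f_H(x)|, |f_V(x)|)` and
the sum ranges over the lattice points of the Euclidean ball of radius `r + 1`. -/
theorem weight_function_sum_asymptotics :
    ∃ C : ℝ, 0 < C ∧ ∀ r : ℕ, 2 ≤ r →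
      |(∑ x ∈ HV.ballFinset ((r : ℝ) + 1), HV.fMax x) - (2 / Real.pi) * Real.log r| ≤
        C := by
  have hp : 0 < 2 / Real.pi := by positivity
  have hf := HV.fMax_nonneg (0, 0)
  refine ⟨HV.fMax (0, 0) + (2 / Real.pi) * 5 + 1, by positivity, fun r hr => ?_⟩
  have h1 := (HV.ball_le r).trans (HV.W_le r)
  have h2 := (HV.le_W (r / 2)).trans (HV.le_ball r)
  have hr0 : (0 : ℝ) < r := by exact_mod_cast (by omega : 0 < r)
  have h3 : Real.log r - 1 ≤ Real.log ((r / 2 : ℕ) + 1) := by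
    have h4 : Real.log (r / 2) ≤ Real.log ((r / 2 : ℕ) + 1) := by
      refine Real.log_le_log (by positivity) ?_
      have : (r : ℝ) ≤ 2 * (r / 2 : ℕ) + 2 := by
        exact_mod_cast (by omega : r ≤ 2 * (r / 2) + 2)
      linarith
    rw [Real.log_div hr0.ne' two_ne_zero] at h4
    linarith [Real.log_two_lt_d9]
  have h5 := mul_le_mul_of_nonneg_left h3 hp.le
  rw [abs_le]
  constructor <;> linarith
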